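/- arXiv:1409.1275 — 5 statements merged into one kernel-verified Lean document; each statement's English description precedes it below -/
import Mathlib

section
/- Let A be a commutative ring and B an A-algebra which is finite and free as an A-module. Let C := B ⊗_A B, m : C → B the multiplication map, J := ker m, and 𝒟 := m(Ann_C(J)). Then 𝒟 is contained in the different ideal δ_{B/A}; that is, for every x ∈ Ann_C(J) and every A-linear form f : B → A, the element m(x)·f (for the B-module structure (b·f)(y)=f(by) on Hom_A(B,A)) lies in the image of the trace map τ_{B/A}. -/
open scoped TensorProduct

/-- auxiliary map `u ⊗ v ↦ (z ↦ f (u z) v)` -/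
noncomputable def auxPhi {A B : Type*} [CommRing A] [CommRing B] [Algebra A B]
    (f : B →ₗ[A] A) : B ⊗[A] B →ₗ[A] (B →ₗ[A] B) :=
  TensorProduct.lift
    ((LinearMap.smulRightₗ (R := A) (M := B) (M₂ := B)).comp
      ((LinearMap.mul A B).compr₂ f))

theorem auxPhi_tmul {A B : Type*} [CommRing A] [CommRing B] [Algebra A B]
    (f : B →ₗ[A] A) (u v z : B) : auxPhi f (u ⊗ₜ[A] v) z = f (u * z) • v := by
  simp [auxPhi]

theorem auxPhi_left {A B : Type*} [CommRing A] [CommRing B] [Algebra A B]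
    (f : B →ₗ[A] A) (c : B ⊗[A] B) (z : B) :
    auxPhi f (c * (z ⊗ₜ[A] 1)) 1 = auxPhi f c z := by
  induction c with
  | zero => simp
  | add a b ha hb => simp [add_mul, ha, hb]
  | tmul u v => simp [auxPhi_tmul]

theorem auxPhi_right {A B : Type*} [CommRing A] [CommRing B] [Algebra A B]
    (f : B →ₗ[A] A) (c : B ⊗[A] B) (z w : B) :
    auxPhi f (c * (1 ⊗ₜ[A] z)) w = auxPhi f c w * z := by
  induction c with
  | zero => simp
  | add a b ha hb => simp [add_mul, ha, hb]
  | tmul u v => simp [auxPhi_tmul]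

theorem auxPhi_trace {A B : Type*} [CommRing A] [CommRing B] [Algebra A B]
    [Module.Finite A B] [Module.Free A B]
    (f : B →ₗ[A] A) (c : B ⊗[A] B) :
    LinearMap.trace A B (auxPhi f c) = f (Algebra.TensorProduct.lmul' A (S := B) c) := by
  induction c with
  | zero => simp
  | add a b ha hb => simp [ha, hb]
  | tmul u v =>
    have : auxPhi f (u ⊗ₜ[A] v) = (f ∘ₗ LinearMap.mulLeft A u).smulRight v := by
      ext z
      simp [auxPhi_tmul]
    rw [this, LinearMap.trace_smulRight]
    simp

/-- Let `A` be a commutative ring and `B` an `A`-algebra which is finite and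
free as an `A`-module.  Let `C := B ⊗[A] B`, `m : C → B` the multiplication map, `J := ker m`.
Then `𝒟 := m(Ann_C J)` is contained in the different ideal `δ_{B/A}`: for every
`x ∈ Ann_C J` and every `A`-linear form `f : B → A`, the element `m x · f` (for the `B`-module
structure `(b · f) y = f (b * y)` on `Hom_A(B, A)`) lies in the image of the trace map
`τ_{B/A}`, i.e. there is `b : B` with `f (m x * y) = Tr_{B/A} (b * y)` for all `y`. -/
theorem different_contains_D
    {A B : Type*} [CommRing A] [CommRing B] [Algebra A B]
    [Module.Finite A B] [Module.Free A B]
    (x : B ⊗[A] B)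
    (hx : ∀ j ∈ RingHom.ker (Algebra.TensorProduct.lmul' A : B ⊗[A] B →ₐ[A] B), x * j = 0)
    (f : B →ₗ[A] A) :
    ∃ b : B, ∀ y : B,
      f (Algebra.TensorProduct.lmul' A (S := B) x * y) = Algebra.trace A B (b * y) := by
  refine ⟨auxPhi f x 1, fun y => ?_⟩
  have key : ∀ z, auxPhi f x z = auxPhi f x 1 * z := by
    intro z
    have h := hx (z ⊗ₜ[A] 1 - 1 ⊗ₜ[A] z) (by simp [RingHom.mem_ker])
    rw [mul_sub, sub_eq_zero] at h
    rw [← auxPhi_left, h, auxPhi_right]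
  have h1 : auxPhi f (x * (1 ⊗ₜ[A] y)) = Algebra.lmul A B (auxPhi f x 1 * y) := by
    ext z
    rw [auxPhi_right, key z]
    simp only [Algebra.coe_lmul_eq_mul, LinearMap.mul_apply']
    ring
  rw [Algebra.trace_apply, ← h1, auxPhi_trace]
  simp
end

section
/- Let A be a commutative ring and B an A-algebra which is finite and free as an A-module. Then the different ideal δ_{B/A} annihilates the kernel of the trace map: for every x ∈ δ_{B/A} and every b ∈ B with τ_{B/A}(b) = 0, one has x·b = 0. -/
/-- Let `A` be a commutative ring and `B` an `A`-algebra which is finite and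
free as an `A`-module.  Then the different ideal `δ_{B/A}` annihilates the kernel of the trace
map `τ_{B/A} : B → Hom_A(B, A)`, `τ_{B/A}(b)(y) = Tr_{B/A}(b * y)`: if `x ∈ δ_{B/A}` (i.e.
for every `f : Hom_A(B, A)` the element `x · f` lies in the image of `τ_{B/A}`) and
`τ_{B/A}(b) = 0`, then `x * b = 0`. -/
theorem different_annihilates_ker_trace
    {A B : Type*} [CommRing A] [CommRing B] [Algebra A B]
    [Module.Finite A B] [Module.Free A B]
    (x : B)
    (hx : ∀ f : B →ₗ[A] A, ∃ b : B, ∀ y : B, f (x * y) = Algebra.trace A B (b * y))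
    (b : B) (hb : ∀ y : B, Algebra.trace A B (b * y) = 0) :
    x * b = 0 := by
  apply (Module.Free.chooseBasis A B).ext_elem
  intro i
  obtain ⟨c, hc⟩ := hx ((Module.Free.chooseBasis A B).coord i)
  have h := hc b
  rw [mul_comm c b, hb c] at h
  simpa using h
end

section
/- Let A be a commutative ring and B an A-algebra which is finite and free as an A-module. Let C := B ⊗_A B, m : C → B the multiplication map, J := ker m, and 𝒟 := m(Ann_C(J)). Then Ann_B(ker τ_{B/A}) · δ_{B/A} ⊆ 𝒟: if x ∈ B satisfies x·(ker τ_{B/A}) = 0 and y ∈ δ_{B/A}, then xy ∈ 𝒟. -/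
open scoped TensorProduct

/-- Let `A` be a commutative ring and `B` an `A`-algebra which is finite and
free as an `A`-module.  Let `C := B ⊗[A] B`, `m : C → B` the multiplication map, `J := ker m`
and `𝒟 := m(Ann_C J)`.  Then `Ann_B(ker τ_{B/A}) · δ_{B/A} ⊆ 𝒟`: if `x : B` annihilates the
kernel of the trace map `τ_{B/A}` and `y ∈ δ_{B/A}`, then `x * y ∈ 𝒟`, i.e. `x * y = m c` for
some `c` annihilating `J`. -/
theorem ann_ker_trace_mul_different_subset_D
    {A B : Type*} [CommRing A] [CommRing B] [Algebra A B]
    [Module.Finite A B] [Module.Free A B]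
    (x : B)
    (hx : ∀ b : B, (∀ z : B, Algebra.trace A B (b * z) = 0) → x * b = 0)
    (y : B)
    (hy : ∀ f : B →ₗ[A] A, ∃ b : B, ∀ z : B, f (y * z) = Algebra.trace A B (b * z)) :
    ∃ c : B ⊗[A] B,
      (∀ j ∈ RingHom.ker (Algebra.TensorProduct.lmul' A : B ⊗[A] B →ₐ[A] B), c * j = 0) ∧
      Algebra.TensorProduct.lmul' A (S := B) c = x * y := by
  classical
  let e := Module.Free.chooseBasis A B
  choose b hb using fun i => hy (e.coord i)
  have key : ∀ u v : B, (∀ z, Algebra.trace A B (u * z) = Algebra.trace A B (v * z)) →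
      x * u = x * v := by
    intro u v h
    have := hx (u - v) (fun z => by rw [sub_mul, map_sub, h, sub_self])
    rwa [mul_sub, sub_eq_zero] at this
  have h1 : ∀ (w : B) j, x * (∑ i, e.coord j (w * e i) • b i) = x * (w * b j) := by
    intro w j
    apply key
    intro z
    have h2 : w * b j * z = b j * (w * z) := by ring
    rw [h2, ← hb, Finset.sum_mul, map_sum]
    simp only [smul_mul_assoc, map_smul, ← hb]
    have h3 : y * (w * z) = w * (y * z) := by ring
    rw [h3]
    conv_rhs => rw [← e.sum_repr (y * z), Finset.mul_sum, map_sum]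
    refine Finset.sum_congr rfl fun i _ => ?_
    rw [mul_smul_comm, map_smul, smul_eq_mul, smul_eq_mul, mul_comm, e.coord_apply i]
  have hc : ∀ w : B, (∑ i, (x * b i) ⊗ₜ[A] e i) * ((1 : B) ⊗ₜ[A] w)
      = (∑ i, (x * b i) ⊗ₜ[A] e i) * (w ⊗ₜ[A] (1 : B)) := by
    intro w
    simp only [Finset.sum_mul, Algebra.TensorProduct.tmul_mul_tmul, mul_one]
    have h4 : ∀ i, (x * b i) ⊗ₜ[A] (e i * w)
        = ∑ j, (e.coord j (w * e i) • (x * b i)) ⊗ₜ[A] e j := by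
      intro i
      conv_lhs => rw [← e.sum_repr (e i * w), TensorProduct.tmul_sum]
      refine Finset.sum_congr rfl fun j _ => ?_
      rw [TensorProduct.tmul_smul, TensorProduct.smul_tmul', mul_comm w, e.coord_apply]
    simp only [h4]
    rw [Finset.sum_comm]
    refine Finset.sum_congr rfl fun j _ => ?_
    rw [← TensorProduct.sum_tmul]
    congr 1
    have := h1 w j
    rw [Finset.mul_sum] at this
    simp only [mul_smul_comm] at this
    rw [this]
    ring
  refine ⟨∑ i, (x * b i) ⊗ₜ[A] e i, ?_, ?_⟩
  · have hall : ∀ t : B ⊗[A] B, (∑ i, (x * b i) ⊗ₜ[A] e i) * t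
        = (∑ i, (x * b i) ⊗ₜ[A] e i) *
          ((Algebra.TensorProduct.lmul' A (S := B) t) ⊗ₜ[A] (1 : B)) := by
      intro t
      induction t with
      | zero => simp
      | add s t hs ht => rw [mul_add, hs, ht, map_add, TensorProduct.add_tmul, mul_add]
      | tmul u v =>
        have h5 : u ⊗ₜ[A] v = ((1 : B) ⊗ₜ[A] v) * (u ⊗ₜ[A] (1 : B)) := by simp
        rw [h5, ← mul_assoc, hc, mul_assoc]
        simp [mul_comm]
    intro j hj
    rw [hall, (RingHom.mem_ker).1 hj, TensorProduct.zero_tmul, mul_zero]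
  · rw [map_sum]
    simp only [Algebra.TensorProduct.lmul'_apply_tmul, mul_assoc]
    rw [← Finset.mul_sum]
    apply key
    intro z
    rw [Finset.sum_mul, map_sum]
    simp only [mul_assoc, ← hb]
    rw [Algebra.trace_eq_matrix_trace e, Matrix.trace]
    refine Finset.sum_congr rfl fun i _ => ?_
    rw [Matrix.diag_apply, Algebra.leftMulMatrix_eq_repr_mul, e.coord_apply, mul_assoc,
      mul_comm z]
end

section
/- Let A be a commutative ring and B an A-algebra which is finite and free as an A-module. Let C := B ⊗_A B, regarded as a B-algebra via the map b ↦ 1 ⊗ b (so C is finite and free as a B-module), let m : C → B be the multiplication map and J := ker m. Then for every x ∈ Ann_C(J), the trace over B of the B-linear endomorphism of C given by multiplication by x equals m(x): Tr_{C/B}(x) = m(x). -/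
open scoped TensorProduct

theorem trace_aux_general {B C : Type*} [CommRing B] [CommRing C] [Algebra B C]
    [Module.Finite B C] [Module.Free B C] (m : C →ₐ[B] B) (x : C)
    (hx : ∀ j, m j = 0 → x * j = 0) : Algebra.trace B C x = m x := by
  have h : Algebra.lmul B C x = (LinearMap.toSpanSingleton B C x) ∘ₗ m.toLinearMap := by
    ext c
    have h1 := hx (c - algebraMap B C (m c)) (by simp)
    rw [mul_sub, sub_eq_zero] at h1
    simp [h1, Algebra.smul_def, mul_comm]
  rw [Algebra.trace_apply, h, LinearMap.trace_comp_comm']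
  have h2 : m.toLinearMap ∘ₗ LinearMap.toSpanSingleton B C x = LinearMap.mulLeft B (m x) := by
    ext; simp
  rw [h2]
  exact Algebra.trace_self_apply (m x)

theorem finite_free_aux {B M N : Type*} [CommRing B] [AddCommGroup M] [AddCommGroup N]
    {m₁ : Module B M} {m₂ : Module B N} (_ : Module.Finite B M) (_ : Module.Free B M)
    (e : M ≃+ N) (he : ∀ (b : B) (z : M), e (b • z) = b • e z) :
    Module.Finite B N ∧ Module.Free B N :=
  let e' : M ≃ₗ[B] N := { e with map_smul' := he }
  ⟨Module.Finite.equiv e', Module.Free.of_equiv e'⟩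

/-- Let `A` be a commutative ring and `B` an `A`-algebra which is finite and
free as an `A`-module.  Regard `C := B ⊗[A] B` as a `B`-algebra via `b ↦ 1 ⊗ b` (so `C` is
finite and free as a `B`-module), let `m : C → B` be the multiplication map and `J := ker m`.
Then for every `x ∈ Ann_C J`, the trace over `B` of multiplication by `x` on `C` equals
`m x`:  `Tr_{C/B} x = m x`. -/
theorem trace_of_ann_eq_mul
    {A B : Type*} [CommRing A] [CommRing B] [Algebra A B]
    [Module.Finite A B] [Module.Free A B]
    (x : B ⊗[A] B)
    (hx : ∀ j ∈ RingHom.ker (Algebra.TensorProduct.lmul' A : B ⊗[A] B →ₐ[A] B), x * j = 0) :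
    letI : Algebra B (B ⊗[A] B) :=
      (Algebra.TensorProduct.includeRight (R := A) (A := B) (B := B)).toRingHom.toAlgebra
    Algebra.trace B (B ⊗[A] B) x = Algebra.TensorProduct.lmul' A (S := B) x := by
  letI alg : Algebra B (B ⊗[A] B) :=
    (Algebra.TensorProduct.includeRight (R := A) (A := B) (B := B)).toRingHom.toAlgebra
  have key := finite_free_aux (B := B) (M := B ⊗[A] B) (m₁ := TensorProduct.leftModule)
    (N := B ⊗[A] B) (m₂ := alg.toModule)
    (Module.Finite.base_change A B B) (Module.Free.tensor)
    (TensorProduct.comm A B B).toAddEquiv (by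
      intro b z
      change TensorProduct.comm A B B (TensorProduct.leftModule.toSMul.smul b z) =
        ((1 : B) ⊗ₜ[A] b) * TensorProduct.comm A B B z
      induction z using TensorProduct.induction_on with
      | zero =>
        rw [map_zero, mul_zero]
        exact (congrArg _ (TensorProduct.leftModule.smul_zero b)).trans (map_zero _)
      | tmul p q =>
        change q ⊗ₜ[A] (b * p) = ((1 : B) ⊗ₜ[A] b) * (q ⊗ₜ[A] p)
        simp
      | add p q hp hq =>
        rw [map_add, mul_add, ← hp, ← hq, ← map_add]
        exact congrArg _ (TensorProduct.leftModule.smul_add b p q))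
  have := key.1
  have := key.2
  let m : @AlgHom B (B ⊗[A] B) B _ _ _ alg _ :=
    { (Algebra.TensorProduct.lmul' A : B ⊗[A] B →ₐ[A] B).toRingHom with
      commutes' := fun b => by
        change Algebra.TensorProduct.lmul' A ((1 : B) ⊗ₜ[A] b) = b
        simp }
  exact trace_aux_general m x hx
end

section
/- Let A be a commutative ring and B an A-algebra which is finite and free as an A-module. Let C := B ⊗_A B, m : C → B the multiplication map, J := ker m, and 𝒟 := m(Ann_C(J)). Then for every b₀ ∈ B the following are equivalent: (1) b₀ ∈ 𝒟; (2) there exists a C-linear map s : B → C (where B is a C-module via m and C acts on itself by multiplication) such that m(s(b)) = b₀·b for all b ∈ B. (This expresses that the annihilator of the extension class of 0 → J → C → B → 0 in Ext¹_C(B,J) is m⁻¹(𝒟).) -/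
open scoped TensorProduct

/-- Let `A` be a commutative ring and `B` an `A`-algebra which is finite and
free as an `A`-module.  Let `C := B ⊗[A] B`, `m : C → B` the multiplication map, `J := ker m`
and `𝒟 := m(Ann_C J)`.  Then for `b₀ : B` the following are equivalent: (1) `b₀ ∈ 𝒟`;
(2) there is a `C`-linear map `s : B → C` (where `B` is a `C`-module via `m`, so `C`-linearity
of the `A`-linear map `s` means `s (m c * b) = c * s b`) with `m (s b) = b₀ * b` for all `b`.
This expresses that the annihilator of the class of `0 → J → C → B → 0` in `Ext¹_C(B, J)` is
`m⁻¹ 𝒟`. -/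
theorem mem_D_iff_exists_section
    {A B : Type*} [CommRing A] [CommRing B] [Algebra A B]
    [Module.Finite A B] [Module.Free A B] (b₀ : B) :
    (∃ x : B ⊗[A] B,
        (∀ j ∈ RingHom.ker (Algebra.TensorProduct.lmul' A : B ⊗[A] B →ₐ[A] B), x * j = 0) ∧
        Algebra.TensorProduct.lmul' A (S := B) x = b₀) ↔
    (∃ s : B →ₗ[A] B ⊗[A] B,
        (∀ (c : B ⊗[A] B) (b : B), s (Algebra.TensorProduct.lmul' A (S := B) c * b) = c * s b) ∧
        (∀ b : B, Algebra.TensorProduct.lmul' A (S := B) (s b) = b₀ * b)) := by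
  constructor
  · rintro ⟨x, hx, hm⟩
    refine ⟨(LinearMap.mulLeft A x).comp
      (Algebra.TensorProduct.includeLeft : B →ₐ[A] B ⊗[A] B).toLinearMap, ?_, ?_⟩
    · intro c b
      have h := hx ((Algebra.TensorProduct.lmul' A (S := B) c) ⊗ₜ[A] 1 - c) (by
        rw [RingHom.mem_ker, map_sub, Algebra.TensorProduct.lmul'_apply_tmul, mul_one, sub_self])
      have h2 : ((Algebra.TensorProduct.lmul' A (S := B) c * b) ⊗ₜ[A] (1 : B) : B ⊗[A] B)
          = ((Algebra.TensorProduct.lmul' A (S := B) c) ⊗ₜ[A] 1) * (b ⊗ₜ[A] 1) := by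
        rw [Algebra.TensorProduct.tmul_mul_tmul, mul_one]
      change x * ((Algebra.TensorProduct.lmul' A (S := B) c * b) ⊗ₜ[A] (1 : B))
        = c * (x * (b ⊗ₜ[A] (1 : B)))
      rw [h2]
      linear_combination (b ⊗ₜ[A] (1 : B)) * h
    · intro b
      change Algebra.TensorProduct.lmul' A (S := B) (x * (b ⊗ₜ[A] (1 : B))) = b₀ * b
      rw [map_mul, hm, Algebra.TensorProduct.lmul'_apply_tmul, mul_one]
  · rintro ⟨s, hs, hm⟩
    refine ⟨s 1, ?_, by rw [hm, mul_one]⟩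
    intro j hj
    rw [mul_comm, ← hs, (RingHom.mem_ker).1 hj, zero_mul, map_zero]
end
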